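/- arXiv:0801.0054 — 5 statements merged into one kernel-verified Lean document; each statement's English description precedes it below -/
import Mathlib

section
/- Let Σ(n) denote the sum of all 2^(n-1) entries of the n-th generation of the Calkin–Wilf tree. Then for every n ≥ 1, Σ(n) = 3·2^(n-2) − 1/2. -/
/-- The generations of the Calkin–Wilf tree: `CW 0 = [1/1]` is the first
generation, and each generation is obtained from the previous one by replacing
each entry `x` by `x/(x+1)` and `x+1`, in this order.  Thus the `n`-th
generation of the paper is `CW (n-1)`. -/
def CW : ℕ → List ℚ
  | 0 => [1]
  | n + 1 => (CW n).flatMap (fun x => [x / (x + 1), x + 1])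

lemma CW_pos (n : ℕ) : ∀ x ∈ CW n, 0 < x := by
  induction n with
  | zero => simp [CW]
  | succ n ih =>
    intro x hx
    simp only [CW, List.mem_flatMap, List.mem_cons, List.not_mem_nil, or_false] at hx
    obtain ⟨y, hy, h⟩ := hx
    have := ih y hy
    rcases h with rfl | rfl <;> positivity

lemma flatMap_sum (L : List ℚ) (g : ℚ → ℚ) :
    ((L.flatMap (fun x => [x / (x + 1), x + 1])).map g).sum
      = (L.map (fun x => g (x / (x + 1)) + g (x + 1))).sum := by
  induction L with
  | nil => simp
  | cons a L ih =>
    simp only [List.flatMap_cons, List.map_append, List.sum_append, ih, List.map_cons,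
      List.sum_cons, List.map_nil, List.sum_nil]
    ring

lemma CW_symm (n : ℕ) : ∀ g : ℚ → ℚ,
    ((CW n).map g).sum = ((CW n).map (fun x => g x⁻¹)).sum := by
  induction n with
  | zero => simp [CW]
  | succ n ih =>
    intro g
    simp only [CW]
    rw [flatMap_sum, flatMap_sum, ih]
    congr 1
    apply List.map_congr_left
    intro x hx
    have hp := CW_pos n x hx
    have h1 : x⁻¹ / (x⁻¹ + 1) = (x + 1)⁻¹ := by field_simp; ring
    have h2 : (x / (x + 1))⁻¹ = x⁻¹ + 1 := by field_simp; ring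
    rw [h1, h2, add_comm]

lemma CW_length (n : ℕ) : ((CW n).map (fun _ => (1 : ℚ))).sum = 2 ^ n := by
  induction n with
  | zero => simp [CW]
  | succ n ih =>
    simp only [CW]
    rw [flatMap_sum, List.sum_map_add, ih]
    ring

lemma CW_half (n : ℕ) : ((CW n).map (fun x => x / (x + 1))).sum = 2 ^ n / 2 := by
  have h := CW_symm n (fun x => x / (x + 1))
  have h2 : ((CW n).map (fun x => x / (x + 1) + x⁻¹ / (x⁻¹ + 1))).sum = 2 ^ n := by
    rw [← CW_length n]
    congr 1
    apply List.map_congr_left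
    intro x hx
    have hp := CW_pos n x hx
    field_simp
    try ring
  rw [List.sum_map_add] at h2
  linarith

lemma CW_sum (n : ℕ) : (CW n).sum = 3 * 2 ^ n / 2 - 1 / 2 := by
  induction n with
  | zero => norm_num [CW]
  | succ n ih =>
    have h := flatMap_sum (CW n) (fun x => x)
    rw [List.map_id', List.sum_map_add, List.sum_map_add, CW_half, CW_length, List.map_id', ih] at h
    simp only [CW]
    rw [h]
    ring

/-- The sum `Σ(n)` of all `2^(n-1)` entries of the `n`-th generation of the
Calkin–Wilf tree equals `3·2^(n-2) − 1/2`. -/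
theorem calkin_wilf_generation_sum (n : ℕ) (hn : 1 ≤ n) :
    (CW (n - 1)).sum = 3 * (2 : ℚ) ^ ((n : ℤ) - 2) - 1 / 2 := by
  obtain ⟨m, rfl⟩ := Nat.exists_eq_add_of_le' hn
  have e : ((m + 1 : ℕ) : ℤ) - 2 = (m : ℤ) - 1 := by push_cast; ring
  rw [e, zpow_sub₀ (by norm_num), Nat.add_sub_cancel, CW_sum, zpow_natCast]
  ring
end

section
/- For every n ≥ 1, the sum of the continued fraction values [a_0, a_1, …, a_m], taken over all finite sequences (a_0, a_1, …, a_m) with m ≥ 0, a_0 ≥ 0, a_j ≥ 1 for 1 ≤ j ≤ m, a_m ≥ 2 when m ≥ 1, and a_0 + a_1 + … + a_m = n, equals 2^(n-1)·(3/2 − 2^(−n)) = 3·2^(n-2) − 1/2. -/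
/-- The value of the finite continued fraction
`[a₀, a₁, …, a_m] = a₀ + 1/(a₁ + 1/(⋯ + 1/a_m))`, given as the list
`[a₀, a₁, …, a_m]` of its partial quotients. -/
def cfVal : List ℕ → ℚ
  | [] => 0
  | [a] => (a : ℚ)
  | a :: l => (a : ℚ) + (cfVal l)⁻¹

/-- Increment the head of a list. -/
def cfInc : List ℕ → List ℕ
  | [] => []
  | a :: l => (a + 1) :: l

theorem cfInc_inj : Function.Injective cfInc := by
  intro a b h
  cases a <;> cases b <;> simp_all [cfInc]

theorem cfInc_zero_inj : Function.Injective (fun L => 0 :: cfInc L) := by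
  intro a b h
  exact cfInc_inj (List.cons.inj h).2

/-- The lists of sum `n + 1`. -/
def cfT : ℕ → Finset (List ℕ)
  | 0 => {[1]}
  | n + 1 => (cfT n).image cfInc ∪ (cfT n).image (fun L => 0 :: cfInc L)

theorem cfT_sum (n : ℕ) (F : List ℕ → ℚ) :
    ∑ L ∈ cfT (n + 1), F L = ∑ L ∈ cfT n, (F (cfInc L) + F (0 :: cfInc L)) := by
  rw [cfT, Finset.sum_union, Finset.sum_image cfInc_inj.injOn,
    Finset.sum_image cfInc_zero_inj.injOn, Finset.sum_add_distrib]
  rw [Finset.disjoint_left]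
  intro L h1 h2
  simp only [Finset.mem_image] at h1 h2
  obtain ⟨a, -, rfl⟩ := h1
  obtain ⟨b, -, h⟩ := h2
  cases a <;> simp [cfInc] at h

/-- The index predicate. -/
def cfP (n : ℕ) (L : List ℕ) : Prop :=
  L ≠ [] ∧ (∀ a ∈ L.tail, 1 ≤ a) ∧ (2 ≤ L.length → 2 ≤ L.getLast!) ∧ L.sum = n

theorem cfP_inc (n : ℕ) (L : List ℕ) : cfP (n + 1) (cfInc L) ↔ cfP n L := by
  rcases L with _ | ⟨a, _ | ⟨b, l⟩⟩
  · simp [cfP, cfInc]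
  · simp [cfP, cfInc]
  · simp [cfP, cfInc, List.getLast!]
    intros
    omega

theorem cfP_zero_inc (n : ℕ) (hn : 1 ≤ n) (L : List ℕ) :
    cfP (n + 1) (0 :: cfInc L) ↔ cfP n L := by
  rcases L with _ | ⟨a, _ | ⟨b, l⟩⟩
  · simp [cfP, cfInc]
  · simp [cfP, cfInc, List.getLast!]
    omega
  · simp [cfP, cfInc, List.getLast!]
    intros
    omega

theorem mem_cfT (n : ℕ) (L : List ℕ) : L ∈ cfT n ↔ cfP (n + 1) L := by
  induction n generalizing L with
  | zero =>
    rcases L with _ | ⟨a, _ | ⟨b, l⟩⟩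
    · simp [cfP, cfT]
    · simp [cfP, cfT]
    · simp only [cfT, Finset.mem_singleton]
      constructor
      · intro h
        simp at h
      · rintro ⟨-, -, h2, h3⟩
        exfalso
        have h2 := h2 (by simp)
        have : (a :: b :: l).getLast! ∈ b :: l := by
          simp [List.getLast!]
        have := List.le_sum_of_mem this
        simp only [List.sum_cons] at h3 this
        omega
  | succ n ih =>
    simp only [cfT, Finset.mem_union, Finset.mem_image]
    constructor
    · rintro (⟨M, hM, rfl⟩ | ⟨M, hM, rfl⟩)
      · exact (cfP_inc _ _).2 ((ih _).1 hM)
      · exact (cfP_zero_inc _ (by omega) _).2 ((ih _).1 hM)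
    · intro h
      rcases L with _ | ⟨_ | a, l⟩
      · simp [cfP] at h
      · right
        rcases l with _ | ⟨_ | b, l⟩
        · simp [cfP] at h
        · simp [cfP] at h
        · exact ⟨b :: l, (ih _).2 ((cfP_zero_inc _ (by omega) (b :: l)).1 h), rfl⟩
      · left
        exact ⟨a :: l, (ih _).2 ((cfP_inc _ (a :: l)).1 h), rfl⟩

theorem cfVal_nonneg (L : List ℕ) : 0 ≤ cfVal L := by
  induction L with
  | nil => simp [cfVal]
  | cons a l ih =>
    cases l with
    | nil => simp [cfVal]
    | cons b l => rw [cfVal]; positivity; simp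

theorem cfVal_inc (L : List ℕ) (h : L ≠ []) : cfVal (cfInc L) = cfVal L + 1 := by
  rcases L with _ | ⟨a, _ | ⟨b, l⟩⟩
  · simp at h
  · simp [cfVal, cfInc]
  · simp [cfVal, cfInc]
    ring

theorem cfVal_zero_inc (L : List ℕ) (h : L ≠ []) :
    cfVal (0 :: cfInc L) = (cfVal L + 1)⁻¹ := by
  rw [← cfVal_inc L h]
  rcases L with _ | ⟨a, l⟩
  · simp at h
  · simp [cfVal, cfInc]

theorem cfT_card (n : ℕ) : ∑ L ∈ cfT n, (1 : ℚ) = 2 ^ n := by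
  induction n with
  | zero => simp [cfT]
  | succ n ih =>
    rw [cfT_sum, Finset.sum_add_distrib, ih]
    ring

theorem cfT_inv (n : ℕ) : ∑ L ∈ cfT n, (cfVal L + 1)⁻¹ = 2 ^ n / 2 := by
  cases n with
  | zero => norm_num [cfT, cfVal]
  | succ n =>
    rw [cfT_sum, pow_succ, ← cfT_card n]
    rw [mul_div_assoc, div_self two_ne_zero, mul_one]
    refine Finset.sum_congr rfl fun L hL => ?_
    have h := ((mem_cfT _ _).1 hL).1
    have := cfVal_nonneg L
    rw [cfVal_inc L h, cfVal_zero_inc L h]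
    field_simp
    ring

theorem cfT_val (n : ℕ) : ∑ L ∈ cfT n, cfVal L = 3 * 2 ^ n / 2 - 1 / 2 := by
  induction n with
  | zero => norm_num [cfT, cfVal]
  | succ n ih =>
    have : ∑ L ∈ cfT (n + 1), cfVal L
        = ∑ L ∈ cfT n, (cfVal L + 1 + (cfVal L + 1)⁻¹) := by
      rw [cfT_sum]
      refine Finset.sum_congr rfl fun L hL => ?_
      have h := ((mem_cfT _ _).1 hL).1
      rw [cfVal_inc L h, cfVal_zero_inc L h]
    rw [this, Finset.sum_add_distrib, Finset.sum_add_distrib, ih, cfT_inv, cfT_card]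
    ring

/-- For every `n ≥ 1`, the sum of the continued fraction values
`[a₀, a₁, …, a_m]` over all finite sequences with `a₀ ≥ 0`, `a_j ≥ 1` for
`1 ≤ j ≤ m`, `a_m ≥ 2` when `m ≥ 1`, and `a₀ + a₁ + ⋯ + a_m = n`, equals
`3·2^(n-2) − 1/2 = 2^(n-1)·(3/2 − 2^(−n))`. -/
theorem sum_continued_fractions_with_partial_quotient_sum (n : ℕ) (hn : 1 ≤ n) :
    ∑ᶠ L ∈ {L : List ℕ | L ≠ [] ∧ (∀ a ∈ L.tail, 1 ≤ a) ∧
        (2 ≤ L.length → 2 ≤ L.getLast! ) ∧ L.sum = n},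
      cfVal L = 3 * (2 : ℚ) ^ ((n : ℤ) - 2) - 1 / 2 := by
  obtain ⟨k, rfl⟩ : ∃ k, n = k + 1 := ⟨n - 1, by omega⟩
  have hs : {L : List ℕ | L ≠ [] ∧ (∀ a ∈ L.tail, 1 ≤ a) ∧
        (2 ≤ L.length → 2 ≤ L.getLast! ) ∧ L.sum = k + 1} = (cfT k : Set (List ℕ)) := by
    ext L
    exact (mem_cfT k L).symm
  rw [hs, finsum_mem_coe_finset, cfT_val]
  have : ((k + 1 : ℕ) : ℤ) - 2 = (k : ℤ) - 1 := by
    push_cast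
    ring
  rw [this, zpow_sub₀ two_ne_zero, zpow_natCast, zpow_one]
  ring
end

section
/- Let 0 ≤ α < β be real numbers and let c_0, c_1, …, c_m be positive integers with c_m ≥ 2 (and c_0 ≥ 0 allowed). Then there exist an integer k ≥ 0 and integers d_0 ≥ 0, d_1, …, d_k ≥ 1 such that the rational number x = [d_0, d_1, …, d_k, c_0, c_1, …, c_m], whose continued fraction expansion ends with the block c_0, c_1, …, c_m, satisfies α < x < β. (Equivalently: every finite path in the Calkin–Wilf tree admits a continuation that reaches a rational in the interval (α, β).) -/
theorem cfVal_cons_aux (a : ℕ) (l : List ℕ) (hl : l ≠ []) :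
    cfVal (a :: l) = (a : ℚ) + (cfVal l)⁻¹ := by
  cases l with
  | nil => exact absurd rfl hl
  | cons b t => rfl

open Filter Topology in
theorem cf_approx_aux (C : List ℕ) (hC : C ≠ []) (b : ℕ) :
    ∀ a : ℕ, 0 < b → ∀ U ∈ 𝓝 ((a : ℝ) / b), ∃ D : List ℕ, (∀ x ∈ D, 1 ≤ x) ∧
      (cfVal ((a / b) :: D ++ C) : ℝ) ∈ U := by
  induction b using Nat.strong_induction_on with
  | _ b ih =>
    intro a hb U hU
    have hbR : (b : ℝ) ≠ 0 := by positivity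
    have hdiv : (a : ℝ) = b * ((a / b : ℕ) : ℝ) + ((a % b : ℕ) : ℝ) := by
      exact_mod_cast (Nat.div_add_mod a b).symm
    by_cases hr : a % b = 0
    · have hq : (a : ℝ) / b = ((a / b : ℕ) : ℝ) := by
        rw [hr] at hdiv
        rw [div_eq_iff hbR]; push_cast at hdiv ⊢; linarith
      rw [hq] at hU
      have h1 : Tendsto (fun N : ℕ => (N : ℝ) + ((cfVal C : ℚ) : ℝ)⁻¹) atTop atTop :=
        tendsto_atTop_add_const_right _ _ tendsto_natCast_atTop_atTop
      have h2 : Tendsto (fun N : ℕ => ((a / b : ℕ) : ℝ) + ((N : ℝ) + ((cfVal C : ℚ) : ℝ)⁻¹)⁻¹)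
          atTop (𝓝 (((a / b : ℕ) : ℝ) + 0)) :=
        (tendsto_inv_atTop_zero.comp h1).const_add _
      rw [add_zero] at h2
      obtain ⟨N, hN, hN1⟩ := ((h2.eventually hU).and (eventually_ge_atTop 1)).exists
      refine ⟨[N], by simpa using hN1, ?_⟩
      have : cfVal ((a / b) :: [N] ++ C) = ((a / b : ℕ) : ℚ) + ((N : ℚ) + (cfVal C)⁻¹)⁻¹ := by
        change cfVal ((a / b) :: (N :: C)) = _
        rw [cfVal_cons_aux _ _ (by simp), cfVal_cons_aux _ _ hC]
      rw [this]
      rw [Rat.cast_add, Rat.cast_inv, Rat.cast_add, Rat.cast_inv, Rat.cast_natCast,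
        Rat.cast_natCast]
      exact hN
    · have hr0 : 0 < a % b := Nat.pos_of_ne_zero hr
      have hlt : a % b < b := Nat.mod_lt _ hb
      have hrR : ((a % b : ℕ) : ℝ) ≠ 0 := by positivity
      have hq : (a : ℝ) / b = ((a / b : ℕ) : ℝ) + ((b : ℝ) / ((a % b : ℕ) : ℝ))⁻¹ := by
        rw [inv_div, div_eq_iff hbR, add_mul, div_mul_cancel₀ _ hbR]; linarith
      have hne : (b : ℝ) / ((a % b : ℕ) : ℝ) ≠ 0 := div_ne_zero hbR hrR
      have hc : Tendsto (fun x : ℝ => ((a / b : ℕ) : ℝ) + x⁻¹) (𝓝 ((b : ℝ) / ((a % b : ℕ) : ℝ)))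
          (𝓝 ((a : ℝ) / b)) := by
        rw [hq]; exact (tendsto_inv₀ hne).const_add _
      obtain ⟨D, hD, hDU⟩ := ih (a % b) hlt b hr0 _ (hc hU)
      refine ⟨(b / (a % b)) :: D, ?_, ?_⟩
      · intro x hx
        rcases List.mem_cons.1 hx with rfl | hx
        · exact Nat.div_pos hlt.le hr0
        · exact hD x hx
      · have : cfVal ((a / b) :: ((b / (a % b)) :: D) ++ C) =
            ((a / b : ℕ) : ℚ) + (cfVal ((b / (a % b)) :: D ++ C))⁻¹ :=
          cfVal_cons_aux _ _ (by simp)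
        rw [this, Rat.cast_add, Rat.cast_inv, Rat.cast_natCast]
        exact hDU

/-- Given `0 ≤ α < β` and a block `c₀, c₁, …, c_m` of partial quotients
(`c_j ≥ 1` for `j ≥ 1`, `c_m ≥ 2`, `c₀ ≥ 0` allowed), there are `k ≥ 0` and
`d₀ ≥ 0`, `d₁, …, d_k ≥ 1` such that the rational
`x = [d₀, d₁, …, d_k, c₀, c₁, …, c_m]`, whose continued fraction expansion ends
with the given block, satisfies `α < x < β`.  (Every finite path in the
Calkin–Wilf tree admits a continuation reaching a rational in `(α, β)`.) -/
theorem continued_fraction_tail_dense (α β : ℝ) (hα : 0 ≤ α) (hαβ : α < β)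
    (C : List ℕ) (hC : C ≠ []) (hCtail : ∀ c ∈ C.tail, 1 ≤ c)
    (hClast : 2 ≤ C.getLast hC) :
    ∃ D : List ℕ, D ≠ [] ∧ (∀ d ∈ D.tail, 1 ≤ d) ∧
      α < (cfVal (D ++ C) : ℝ) ∧ (cfVal (D ++ C) : ℝ) < β := by
  obtain ⟨q, h1, h2⟩ := exists_rat_btwn hαβ
  have hq : (0 : ℚ) ≤ q := by exact_mod_cast hα.trans h1.le
  have hcast : ((q.num.toNat : ℕ) : ℝ) / (q.den : ℝ) = (q : ℝ) := by
    have hn : ((q.num.toNat : ℕ) : ℤ) = q.num := Int.toNat_of_nonneg (Rat.num_nonneg.2 hq)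
    have hn' : ((q.num.toNat : ℕ) : ℝ) = (q.num : ℝ) := by exact_mod_cast congrArg (Int.cast (R := ℝ)) hn
    rw [hn', Rat.cast_def]
  obtain ⟨D, hD, hDU⟩ := cf_approx_aux C hC q.den q.num.toNat q.den_pos (Set.Ioo α β)
    (by rw [hcast]; exact Ioo_mem_nhds h1 h2)
  exact ⟨(q.num.toNat / q.den) :: D, by simp, by simpa using hD, hDU.1, hDU.2⟩
end

section
/- Let Ω = {0,1}^ℕ carry the infinite product of Bernoulli(1/2) measures, and define the random walk X : Ω → ℕ → ℚ by X(ω)(0) = 1 and X(ω)(n+1) = X(ω)(n) + 1 if ω(n) = 1, and X(ω)(n+1) = X(ω)(n)/(X(ω)(n) + 1) if ω(n) = 0. Then for any real numbers 0 ≤ α < β, for almost every ω ∈ Ω there exists m ∈ ℕ with α < X(ω)(m) < β. -/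
open MeasureTheory Filter
open scoped ENNReal

/-- The random walk on the Calkin–Wilf tree driven by a sequence of coin flips
`ω : ℕ → Bool`: it starts at the root `1/1`, and at step `n` it moves from the
current value `x` to the right child `x + 1` if `ω n = true` and to the left
child `x/(x+1)` if `ω n = false`. -/
def cwWalk (ω : ℕ → Bool) : ℕ → ℚ
  | 0 => 1
  | n + 1 => if ω n then cwWalk ω n + 1 else cwWalk ω n / (cwWalk ω n + 1)

lemma cwWalk_pos (ω : ℕ → Bool) (n : ℕ) : 0 < cwWalk ω n := by
  induction n with
  | zero => simp [cwWalk]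
  | succ n ih =>
    rw [cwWalk]
    split_ifs <;> positivity

/-- The word `g 0 ... g (k-1)` steers the walk to within `ε` of `r` from anywhere. -/
def CWGood (k : ℕ) (g : ℕ → Bool) (r ε : ℚ) : Prop :=
  ∀ (ω : ℕ → Bool) (n : ℕ), (∀ i < k, ω (n + i) = g i) → |cwWalk ω (n + k) - r| < ε

lemma cw_false (ω : ℕ → Bool) (n j : ℕ) (h : ∀ i < j, ω (n + i) = false) :
    cwWalk ω (n + j) * j < 1 := by
  induction j with
  | zero => simp
  | succ j ih =>
    have h1 := ih (fun i hi => h i (by omega))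
    have hp := cwWalk_pos ω (n + j)
    rw [← add_assoc, cwWalk, h j (by omega)]
    simp only [Bool.false_eq_true, if_false]
    push_cast
    rw [div_mul_eq_mul_div, div_lt_one (by positivity)]
    linarith

lemma cwGood_one (ε : ℚ) (hε : 0 < ε) : ∃ k g, CWGood k g 1 ε := by
  obtain ⟨j, hj⟩ := exists_nat_gt (1 / ε)
  refine ⟨j + 1, fun i => decide (i = j), fun ω n h => ?_⟩
  have h1 := cw_false ω n j (fun i hi => by
    rw [h i (by omega)]; simp; omega)
  have h2 : ω (n + j) = true := by rw [h j (by omega)]; simp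
  have hp := cwWalk_pos ω (n + j)
  rw [← add_assoc, cwWalk, h2]
  simp only [if_true, add_sub_cancel_right]
  rw [abs_of_pos hp]
  rw [div_lt_iff₀ hε] at hj
  by_contra hc
  push Not at hc
  have : ε * j ≤ cwWalk ω (n + j) * j := by gcongr
  linarith

lemma cwGood_right {k : ℕ} {g : ℕ → Bool} {r ε : ℚ} (h : CWGood k g r ε) :
    CWGood (k + 1) (fun i => if i < k then g i else true) (r + 1) ε := by
  intro ω n hw
  have h1 := h ω n (fun i hi => by rw [hw i (by omega)]; simp [hi])
  have h2 : ω (n + k) = true := by rw [hw k (by omega)]; simp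
  rw [← add_assoc, cwWalk, h2]
  simpa using h1

lemma cwGood_left {k : ℕ} {g : ℕ → Bool} {r ε : ℚ} (hr : 0 < r) (h : CWGood k g r ε) :
    CWGood (k + 1) (fun i => if i < k then g i else false) (r / (r + 1)) ε := by
  intro ω n hw
  have h1 := h ω n (fun i hi => by rw [hw i (by omega)]; simp [hi])
  have h2 : ω (n + k) = false := by rw [hw k (by omega)]; simp
  have hp := cwWalk_pos ω (n + k)
  rw [← add_assoc, cwWalk, h2]
  simp only [Bool.false_eq_true, if_false]
  set x := cwWalk ω (n + k)
  have e : x / (x + 1) - r / (r + 1) = (x - r) / ((x + 1) * (r + 1)) := by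
    field_simp
    ring
  have h3 : 1 ≤ (x + 1) * (r + 1) := by nlinarith [mul_pos hp hr]
  rw [e, abs_div, abs_of_pos (by positivity : 0 < (x + 1) * (r + 1))]
  exact (div_le_self (abs_nonneg _) h3).trans_lt h1

lemma cwGood_exists (ε : ℚ) (hε : 0 < ε) (N : ℕ) : ∀ a b : ℕ, 0 < a → 0 < b → a + b ≤ N →
    ∃ k g, CWGood k g ((a : ℚ) / b) ε := by
  induction N with
  | zero => intro a b ha hb h; omega
  | succ N ih =>
    intro a b ha hb h
    have hb' : (0 : ℚ) < b := by exact_mod_cast hb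
    have ha' : (0 : ℚ) < a := by exact_mod_cast ha
    rcases lt_trichotomy a b with hab | hab | hab
    · obtain ⟨c, rfl⟩ := Nat.exists_eq_add_of_lt hab
      obtain ⟨k, g, hg⟩ := ih a (c + 1) ha (by omega) (by omega)
      have key := cwGood_left (div_pos ha' (by positivity)) hg
      refine ⟨_, _, Eq.subst (motive := fun q => CWGood _ _ q ε) ?_ key⟩
      push_cast
      field_simp
      try ring
    · subst hab
      rw [div_self hb'.ne']
      exact cwGood_one ε hε
    · obtain ⟨c, rfl⟩ := Nat.exists_eq_add_of_lt hab
      obtain ⟨k, g, hg⟩ := ih (c + 1) b (by omega) hb (by omega)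
      have key := cwGood_right hg
      refine ⟨_, _, Eq.subst (motive := fun q => CWGood _ _ q ε) ?_ key⟩
      push_cast
      field_simp
      try ring

lemma cw_monkey (μ : Measure (ℕ → Bool)) (hprob : IsProbabilityMeasure μ)
    (hcyl : ∀ (s : Finset ℕ) (g : ℕ → Bool),
      μ {ω | ∀ i ∈ s, ω i = g i} = (1 / 2 : ℝ≥0∞) ^ s.card) (k : ℕ) (g : ℕ → Bool) :
    ∀ᵐ ω ∂μ, ∃ n : ℕ, ∀ i < k, ω (n + i) = g i := by
  let B : ℕ → Finset ℕ := fun n => Finset.Ico (n * k) (n * k + k)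
  let G : ℕ → Bool := fun i => g (i % k)
  let E : ℕ → Set (ℕ → Bool) := fun n => {ω | ∀ i ∈ B n, ω i = G i}
  have hmeas : ∀ n, MeasurableSet (E n) := by
    intro n
    have : E n = ⋂ i ∈ B n, (fun ω : ℕ → Bool => ω i) ⁻¹' {G i} := by
      ext ω; simp [E]
    rw [this]
    exact Finset.measurableSet_biInter _ fun i _ =>
      (measurable_pi_apply i) (measurableSet_singleton _)
  have hE : ∀ n, μ (E n) = (1 / 2 : ℝ≥0∞) ^ k := by
    intro n
    simp only [E]
    rw [hcyl]; simp [B]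
  have hdisj : ∀ m n, m < n → Disjoint (B m) (B n) := by
    intro m n hmn
    rw [Finset.disjoint_left]
    intro i hi hj
    simp only [B, Finset.mem_Ico] at hi hj
    have : (m + 1) * k ≤ n * k := Nat.mul_le_mul_right k hmn
    rw [add_mul] at this
    omega
  have hind : ProbabilityTheory.iIndepSet E μ := by
    rw [ProbabilityTheory.iIndepSet_iff_meas_biInter hmeas]
    intro s
    have : (⋂ i ∈ s, E i) = {ω | ∀ i ∈ s.biUnion B, ω i = G i} := by
      ext ω
      simp only [E, Set.mem_iInter, Set.mem_ofPred_eq, Finset.mem_biUnion]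
      exact ⟨fun h i ⟨n, hn, hi⟩ => h n hn i hi, fun h n hn i hi => h i ⟨n, hn, hi⟩⟩
    rw [this, hcyl, Finset.card_biUnion, Finset.prod_congr rfl (fun i _ => hE i)]
    · simp [B, ← pow_mul, mul_comm]
    · intro m _ n _ hmn
      rcases lt_or_gt_of_ne hmn with h | h
      · exact hdisj _ _ h
      · exact (hdisj _ _ h).symm
  have hlim := ProbabilityTheory.measure_limsup_eq_one hmeas hind (by
    simp only [hE]
    exact ENNReal.tsum_const_eq_top_of_ne_zero (by simp))
  have hae : ∀ᵐ ω ∂μ, ω ∈ limsup E atTop :=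
    (mem_ae_iff_prob_eq_one (MeasurableSet.measurableSet_limsup hmeas)).2 hlim
  filter_upwards [hae] with ω hω
  rw [mem_limsup_iff_frequently_mem] at hω
  obtain ⟨n, hn⟩ := hω.exists
  refine ⟨n * k, fun i hi => ?_⟩
  have h1 : ω (n * k + i) = g ((n * k + i) % k) := hn (n * k + i) (by simp [B, hi])
  rw [h1, Nat.mul_add_mod_self_right, Nat.mod_eq_of_lt hi]

/-- Let `μ` be the infinite product of Bernoulli(1/2) measures on
`Ω = {0,1}^ℕ`, i.e. the probability measure giving each cylinder set
determined by finitely many coordinates its natural measure `(1/2)^#coords`.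
Then for any reals `0 ≤ α < β`, for `μ`-almost every `ω` the random walk
`X(ω)` on the Calkin–Wilf tree visits the interval `(α, β)`. -/
theorem calkin_wilf_random_walk_visits_interval
    (μ : Measure (ℕ → Bool)) (hprob : IsProbabilityMeasure μ)
    (hcyl : ∀ (s : Finset ℕ) (g : ℕ → Bool),
      μ {ω | ∀ i ∈ s, ω i = g i} = (1 / 2 : ℝ≥0∞) ^ s.card)
    (α β : ℝ) (hα : 0 ≤ α) (hαβ : α < β) :
    ∀ᵐ ω ∂μ, ∃ m : ℕ, α < (cwWalk ω m : ℝ) ∧ (cwWalk ω m : ℝ) < β := by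
  obtain ⟨r, hr1, hr2⟩ := exists_rat_btwn hαβ
  have hr : 0 < r := by exact_mod_cast hα.trans_lt hr1
  obtain ⟨ε, hε1, hε2⟩ := exists_rat_btwn (lt_min (sub_pos.2 hr1) (sub_pos.2 hr2))
  rw [lt_min_iff] at hε2
  have hε : 0 < ε := by exact_mod_cast hε1
  have hnum : 0 < r.num := Rat.num_pos.2 hr
  obtain ⟨k, g, hg⟩ := cwGood_exists ε hε _ r.num.toNat r.den (by omega) r.den_pos le_rfl
  have hrr : ((r.num.toNat : ℕ) : ℚ) / r.den = r := by
    have : ((r.num.toNat : ℕ) : ℚ) = (r.num : ℚ) := by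
      exact_mod_cast Int.toNat_of_nonneg hnum.le
    rw [this, Rat.num_div_den]
  rw [hrr] at hg
  filter_upwards [cw_monkey μ hprob hcyl k g] with ω ⟨n, hn⟩
  refine ⟨n + k, ?_⟩
  have h := abs_lt.1 (hg ω n hn)
  have h1 : (-(ε : ℝ)) < cwWalk ω (n + k) - r := by exact_mod_cast h.1
  have h2 : (cwWalk ω (n + k) : ℝ) - r < ε := by exact_mod_cast h.2
  constructor <;> linarith [hε2.1, hε2.2]
end

section
/- For every n ≥ 1 the generation distribution functions satisfy the recurrences: 2·F_{n+1}(x) = F_n(x−1) + 1 for all x ≥ 1, and 2·F_{n+1}(x) = F_n(x/(1−x)) for all 0 < x < 1. -/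
open Filter

open scoped Classical in
/-- `Fcw n` is the distribution function of the `(n+1)`-st generation of the
Calkin–Wilf tree: `Fcw (n-1) x = F_n(x) = 2^(1-n) · #{j : x_j^(n) ≤ x}`. -/
noncomputable def Fcw (n : ℕ) (x : ℝ) : ℝ :=
  ((CW n).countP (fun q => decide ((q : ℝ) ≤ x))) / 2 ^ n

open scoped Classical in
/-- `Fcw` counts over the list of real casts; rewrite it as a count over rationals. -/
theorem Fcw_eq_aux (n : ℕ) (x : ℝ) :
    Fcw n x = ((CW n).countP (fun q : ℚ => decide ((q : ℝ) ≤ x)) : ℕ) / 2 ^ n := by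
  have h : ∀ l : List ℚ, (do let a ← l; pure (a : ℝ) : List ℝ) = l.map (fun q : ℚ => (q : ℝ)) := by
    intro l
    simp [List.map_eq_flatMap]
  unfold Fcw
  rw [h, List.countP_map]
  rfl

theorem CW_pos_aux (n : ℕ) : ∀ q ∈ CW n, 0 < q := by
  induction n with
  | zero => intro q hq; simp [CW] at hq; simp [hq]
  | succ n ih =>
    intro q hq
    simp only [CW, List.mem_flatMap] at hq
    obtain ⟨a, ha, hq⟩ := hq
    have h := ih a ha
    simp only [List.mem_cons, List.not_mem_nil, or_false] at hq
    rcases hq with rfl | rfl <;> positivity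

theorem CW_length_aux (n : ℕ) : (CW n).length = 2 ^ n := by
  induction n with
  | zero => simp [CW]
  | succ n ih => simp [CW, List.length_flatMap, ih, pow_succ]

open scoped Classical in
theorem CW_count_ge_aux (x : ℝ) (hx : 1 ≤ x) (l : List ℚ) (hl : ∀ q ∈ l, 0 < q) :
    (l.flatMap (fun x : ℚ => [x / (x + 1), x + 1])).countP (fun q : ℚ => decide ((q : ℝ) ≤ x)) =
      l.countP (fun q : ℚ => decide ((q : ℝ) ≤ x - 1)) + l.length := by
  induction l with
  | nil => simp
  | cons a l ih =>
    have ha : (0 : ℝ) < a := by exact_mod_cast hl a (by simp)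
    have ih := ih (fun q hq => hl q (by simp [hq]))
    have h1 : ((a / (a + 1) : ℚ) : ℝ) ≤ x := by
      push_cast
      rw [div_le_iff₀ (by positivity)]
      nlinarith
    have h2 : ((a + 1 : ℚ) : ℝ) ≤ x ↔ (a : ℝ) ≤ x - 1 := by
      push_cast
      constructor <;> intro h <;> linarith
    rw [List.flatMap_cons, List.countP_append, ih]
    simp only [List.countP_cons, List.countP_nil, List.length_cons, h1, h2, decide_true, if_true]
    omega

open scoped Classical in
theorem CW_count_lt_aux (x : ℝ) (hx : x < 1) (l : List ℚ) (hl : ∀ q ∈ l, 0 < q) :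
    (l.flatMap (fun x : ℚ => [x / (x + 1), x + 1])).countP (fun q : ℚ => decide ((q : ℝ) ≤ x)) =
      l.countP (fun q : ℚ => decide ((q : ℝ) ≤ x / (1 - x))) := by
  induction l with
  | nil => simp
  | cons a l ih =>
    have ha : (0 : ℝ) < a := by exact_mod_cast hl a (by simp)
    have ih := ih (fun q hq => hl q (by simp [hq]))
    have h1 : ((a / (a + 1) : ℚ) : ℝ) ≤ x ↔ (a : ℝ) ≤ x / (1 - x) := by
      push_cast
      rw [div_le_iff₀ (by positivity), le_div_iff₀ (by linarith)]
      constructor <;> intro h <;> linarith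
    have h2 : ¬ ((a + 1 : ℚ) : ℝ) ≤ x := by
      push_cast
      linarith
    rw [List.flatMap_cons, List.countP_append, ih]
    simp only [List.countP_cons, List.countP_nil, h1, h2, decide_false]
    simp
    omega

/-- The distribution functions of successive generations of the Calkin–Wilf
tree satisfy `2·F_{n+1}(x) = F_n(x−1) + 1` for `x ≥ 1` and
`2·F_{n+1}(x) = F_n(x/(1−x))` for `0 < x < 1` (here `F_n = Fcw (n-1)`, so the
recurrence relates `Fcw n` to `Fcw (n-1)` for all `n ≥ 1`). -/
theorem calkin_wilf_distribution_recurrence (n : ℕ) :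
    (∀ x : ℝ, 1 ≤ x → 2 * Fcw (n + 1) x = Fcw n (x - 1) + 1) ∧
    (∀ x : ℝ, 0 < x → x < 1 → 2 * Fcw (n + 1) x = Fcw n (x / (1 - x))) := by
  have h2 : (2 : ℝ) ^ n ≠ 0 := by positivity
  constructor
  · intro x hx
    have h := CW_count_ge_aux x hx (CW n) (CW_pos_aux n)
    rw [CW_length_aux] at h
    simp only [Fcw_eq_aux, CW]
    rw [h]
    push_cast
    field_simp
    ring
  · intro x _ hx
    have h := CW_count_lt_aux x hx (CW n) (CW_pos_aux n)
    simp only [Fcw_eq_aux, CW]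
    rw [h]
    field_simp
    try ring
end
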